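/- Let n ≥ m ≥ k ≥ 1 and p ≥ 1 be integers, set α := m/n and β := k/n, and let B_1, …, B_p be m×n complex matrices each satisfying B_i B_i* = I_m. Then for every real ε > 0, the minimum over all k-element subsets s of {1,…,n} of (1/(n·p)) · ∑_{i=1}^{p} log det(ε·I_k + (B_i)_s* (B_i)_s) is at most α·H(β/α) − H(β) + 2√ε + log(n+1)/n. -/

import Mathlib

open Matrix Finset

/-- The `m × k` submatrix of an `m × n` matrix `B` consisting of the columns of `B`
indexed by the subset `s`. -/
def colSubmatrix {m n : ℕ} (B : Matrix (Fin m) (Fin n) ℂ) (s : Finset (Fin n)) :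
    Matrix (Fin m) {j // j ∈ s} ℂ :=
  Matrix.of fun i j => B i (j : Fin n)

/-- Binary entropy function `H(x) = -x log x - (1-x) log (1-x)`
(with `H 0 = H 1 = 0`, since `Real.log 0 = 0`). -/
noncomputable def binEntropy (x : ℝ) : ℝ :=
  -x * Real.log x - (1 - x) * Real.log (1 - x)

/-- The determinant of a principal submatrix of `M + 1` is the sum of the principal minors of `M`
indexed by subsets. -/
theorem det_submatrix_one_add {ι R : Type*} [Fintype ι] [DecidableEq ι] [CommRing R]
    (M : Matrix ι ι R) (s : Finset ι) :
    ((M + 1).submatrix (Subtype.val : s → ι) Subtype.val).det =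
      ∑ t ∈ s.powerset, (M.submatrix (Subtype.val : t → ι) Subtype.val).det := by
  rw [← det_piecewise_one_eq_submatrix_det]
  have h := (detRowAlternating : (ι → R) [⋀^ι]→ₗ[R] R).toMultilinearMap.map_piecewise_add
    M.row (1 : Matrix ι ι R).row s
  refine Eq.trans ?_ (h.trans (Finset.sum_congr rfl fun t _ => ?_))
  · rfl
  · exact det_piecewise_one_eq_submatrix_det M t

/-- The sum of the `k × k` principal minors of `y + M`, expanded in the principal minors of `M`. -/
theorem sum_det_submatrix_smul_one_add {ι F : Type*} [Fintype ι] [DecidableEq ι] [Field F]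
    (M : Matrix ι ι F) (k : ℕ) {y : F} (hy : y ≠ 0) :
    ∑ s ∈ Finset.univ.powersetCard k,
        ((y • (1 : Matrix ι ι F) + M).submatrix (Subtype.val : s → ι) Subtype.val).det =
      ∑ j ∈ Finset.range (k + 1), y ^ (k - j) * ((Fintype.card ι - j).choose (k - j) : F) *
        ∑ t ∈ Finset.univ.powersetCard j,
          (M.submatrix (Subtype.val : t → ι) Subtype.val).det := by
  have expand : ∀ s ∈ (Finset.univ : Finset ι).powersetCard k,
      ((y • (1 : Matrix ι ι F) + M).submatrix (Subtype.val : s → ι) Subtype.val).det =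
      ∑ t ∈ s.powerset, y ^ (k - #t) * (M.submatrix (Subtype.val : t → ι) Subtype.val).det := by
    intro s hs
    have hcard : #s = k := (Finset.mem_powersetCard.mp hs).2
    have hM : y • (1 : Matrix ι ι F) + M = y • (y⁻¹ • M + 1) := by
      rw [smul_add, smul_smul, mul_inv_cancel₀ hy, one_smul, add_comm]
    rw [hM, submatrix_smul, Pi.smul_apply, Pi.smul_apply, det_smul, det_submatrix_one_add,
      Finset.mul_sum]
    refine Finset.sum_congr rfl fun t ht => ?_
    have htk : #t ≤ k := hcard ▸ Finset.card_le_card (Finset.mem_powerset.mp ht)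
    rw [submatrix_smul, Pi.smul_apply, Pi.smul_apply, det_smul, ← mul_assoc, Fintype.card_coe,
      Fintype.card_coe, hcard, inv_pow, ← pow_sub₀ y hy htk]
  rw [Finset.sum_congr rfl expand]
  rw [Finset.sum_comm' (s' := fun t => (Finset.univ.powersetCard k).filter (t ⊆ ·))
    (t' := (Finset.range (k + 1)).biUnion fun j => (Finset.univ : Finset ι).powersetCard j)]
  · rw [Finset.sum_biUnion]
    · refine Finset.sum_congr rfl fun j hj => ?_
      rw [Finset.mul_sum]
      refine Finset.sum_congr rfl fun t ht => ?_
      have htj : #t = j := (Finset.mem_powersetCard.mp ht).2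
      rw [Finset.sum_const, Finset.card_filter_powersetCard_subset, Finset.card_univ, htj,
        nsmul_eq_mul]
      · ring
      all_goals simp_all
    · exact fun i _ j _ hij => Finset.pairwise_disjoint_powersetCard _ hij
  · intro s t
    simp only [Finset.mem_powersetCard, Finset.mem_powerset, Finset.mem_filter,
      Finset.mem_biUnion, Finset.mem_range, Finset.subset_univ, true_and]
    constructor
    · rintro ⟨h1, h2⟩
      exact ⟨⟨h1, h2⟩, #t, by have := Finset.card_le_card h2; omega, rfl⟩
    · exact fun h => h.1

open Polynomial in
/-- If `A * B = 1`, with `A` having `m` rows, the sum of the `j × j` principal minors of `B * A` is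
the binomial coefficient `C(m, j)`. -/
theorem sum_det_submatrix_mul_eq_choose {ι κ R : Type*} [Fintype ι] [DecidableEq ι] [Fintype κ]
    [DecidableEq κ] [CommRing R] (A : Matrix κ ι R) (B : Matrix ι κ R) (h : A * B = 1) (j : ℕ) :
    ∑ t ∈ Finset.univ.powersetCard j,
        ((B * A).submatrix (Subtype.val : t → ι) Subtype.val).det =
      ((Fintype.card κ).choose j : R) := by
  rw [← coeff_det_one_add_X_smul_eq_sum_minors, Matrix.map_mul, ← Matrix.smul_mul,
    det_one_add_mul_comm, Matrix.mul_smul, ← Matrix.map_mul, h,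
    Matrix.map_one _ C.map_zero C.map_one,
    show (1 + (X : R[X]) • (1 : Matrix κ κ R[X])) = (1 + X : R[X]) • (1 : Matrix κ κ R[X]) by
      rw [add_smul, one_smul], det_smul, det_one, mul_one, coeff_one_add_X_pow]

theorem factorial_mul_pow_le (a b : ℕ) : a.factorial * a ^ b ≤ b.factorial * a ^ a := by
  rcases le_total a b with h | h
  · calc a.factorial * a ^ b = a.factorial * a ^ (b - a) * a ^ a := by
          rw [mul_assoc, ← pow_add, Nat.sub_add_cancel h]
      _ ≤ b.factorial * a ^ a :=
          Nat.mul_le_mul_right _ (Nat.factorial_mul_pow_sub_le_factorial h)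
  · calc a.factorial * a ^ b = b.factorial * a.descFactorial (a - b) * a ^ b := by
          rw [← Nat.factorial_mul_descFactorial (Nat.sub_le a b), Nat.sub_sub_self h]
      _ ≤ b.factorial * a ^ (a - b) * a ^ b := by
          gcongr; exact Nat.descFactorial_le_pow a _
      _ = b.factorial * a ^ a := by rw [mul_assoc, ← pow_add, Nat.sub_add_cancel h]

/-- The mode of the binomial distribution with parameters `n` and `k / n` is `k`. -/
theorem choose_mul_pow_le_choose_mul_pow {n k j : ℕ} (hk : k ≤ n) (hj : j ≤ n) :
    n.choose j * (k ^ j * (n - k) ^ (n - j)) ≤ n.choose k * (k ^ k * (n - k) ^ (n - k)) := by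
  have h := Nat.mul_le_mul (factorial_mul_pow_le k j) (factorial_mul_pow_le (n - k) (n - j))
  have hjf := Nat.choose_mul_factorial_mul_factorial hj
  have hkf := Nat.choose_mul_factorial_mul_factorial hk
  refine Nat.le_of_mul_le_mul_left (c := k.factorial * (n - k).factorial) ?_ (by positivity)
  calc k.factorial * (n - k).factorial * (n.choose j * (k ^ j * (n - k) ^ (n - j)))
      = n.choose j * (k.factorial * k ^ j * ((n - k).factorial * (n - k) ^ (n - j))) := by ring
    _ ≤ n.choose j * (j.factorial * k ^ k * ((n - j).factorial * (n - k) ^ (n - k))) :=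
        Nat.mul_le_mul_left _ h
    _ = (n.choose j * j.factorial * (n - j).factorial) * (k ^ k * (n - k) ^ (n - k)) := by ring
    _ = (n.choose k * k.factorial * (n - k).factorial) * (k ^ k * (n - k) ^ (n - k)) := by
        rw [hjf, hkf]
    _ = _ := by ring

theorem mul_binEntropy_div {n k : ℕ} (hn : 0 < n) (hk : k ≤ n) :
    (n : ℝ) * binEntropy ((k : ℝ) / n) =
      Real.log ((n : ℝ) ^ n) - Real.log (((k ^ k * (n - k) ^ (n - k) : ℕ) : ℝ)) := by
  have hn' : (n : ℝ) ≠ 0 := by positivity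
  have log_div (a : ℕ) : (a : ℝ) * Real.log ((a : ℝ) / n) =
      a * Real.log a - a * Real.log n := by
    rcases eq_or_ne a 0 with rfl | ha
    · simp
    · rw [Real.log_div (by exact_mod_cast ha) hn']; ring
  have log_self (a : ℕ) : ((a ^ a : ℕ) : ℝ) ≠ 0 := by
    exact_mod_cast (Nat.pow_self_pos (n := a)).ne'
  have h1 : 1 - (k : ℝ) / n = ((n - k : ℕ) : ℝ) / n := by
    rw [Nat.cast_sub hk]; field_simp
  have h2 := log_div k
  have h3 := log_div (n - k)
  have h4 : (k : ℝ) + ((n - k : ℕ) : ℝ) = n := by rw [Nat.cast_sub hk]; ring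
  rw [Nat.cast_mul, Real.log_mul (log_self k) (log_self (n - k)), Nat.cast_pow, Nat.cast_pow,
    Real.log_pow, Real.log_pow, Real.log_pow, binEntropy, h1]
  calc (n : ℝ) * (-(k / n) * Real.log (k / n)
        - ((n - k : ℕ) : ℝ) / n * Real.log (((n - k : ℕ) : ℝ) / n))
      = -(k * Real.log (k / n))
        - ((n - k : ℕ) : ℝ) * Real.log (((n - k : ℕ) : ℝ) / n) := by field_simp
    _ = _ := by rw [h2, h3, ← h4]; ring

theorem log_choose_le_binEntropy {n k : ℕ} (hn : 0 < n) (hk : k ≤ n) :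
    Real.log (n.choose k) ≤ n * binEntropy ((k : ℝ) / n) := by
  have hpos : 0 < k ^ k * (n - k) ^ (n - k) := Nat.mul_pos Nat.pow_self_pos Nat.pow_self_pos
  have hc : 0 < n.choose k := Nat.choose_pos hk
  rw [mul_binEntropy_div hn hk, le_sub_iff_add_le, ← Real.log_mul (by positivity) (by positivity)]
  refine Real.log_le_log (by positivity) ?_
  have h := add_pow k (n - k) n
  rw [Nat.add_sub_cancel' hk] at h
  have h' := Finset.single_le_sum (f := fun i => k ^ i * (n - k) ^ (n - i) * n.choose i)
    (fun _ _ => Nat.zero_le _) (Finset.mem_range.mpr (Nat.lt_succ_of_le hk))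
  rw [mul_comm]
  exact_mod_cast h'.trans_eq h.symm

theorem binEntropy_le_log_choose {n k : ℕ} (hn : 0 < n) (hk : k ≤ n) :
    n * binEntropy ((k : ℝ) / n) ≤ Real.log (n.choose k) + Real.log (n + 1) := by
  have hpos : 0 < k ^ k * (n - k) ^ (n - k) := Nat.mul_pos Nat.pow_self_pos Nat.pow_self_pos
  have hc : 0 < n.choose k := Nat.choose_pos hk
  rw [mul_binEntropy_div hn hk, sub_le_iff_le_add, ← Real.log_mul (by positivity) (by positivity),
    ← Real.log_mul (by positivity) (by positivity)]
  refine Real.log_le_log (by positivity) ?_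
  have h := add_pow k (n - k) n
  rw [Nat.add_sub_cancel' hk] at h
  have h' : n ^ n ≤ (n + 1) * (n.choose k * (k ^ k * (n - k) ^ (n - k))) := by
    rw [h]
    refine (Finset.sum_le_card_nsmul _ _ (n.choose k * (k ^ k * (n - k) ^ (n - k)))
      fun j hj => ?_).trans_eq (by simp)
    rw [mul_comm]
    exact choose_mul_pow_le_choose_mul_pow hk (Nat.lt_succ_iff.mp (Finset.mem_range.mp hj))
  calc (n : ℝ) ^ n ≤ (n + 1) * (n.choose k * ((k ^ k * (n - k) ^ (n - k) : ℕ) : ℝ)) := by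
        exact_mod_cast h'
    _ = _ := by ring

theorem sum_pow_mul_choose_mul_choose_le {n m k : ℕ} (hkm : k ≤ m) (hmn : m ≤ n) {ε : ℝ}
    (hε : 0 ≤ ε) :
    ∑ j ∈ Finset.range (k + 1), ε ^ (k - j) * ((n - j).choose (k - j) : ℝ) * (m.choose j : ℝ) ≤
      m.choose k * Real.exp (2 * (n * √ε)) := by
  set x : ℝ := n * √ε with hx
  have hx0 : 0 ≤ x := by positivity
  have term (i : ℕ) (hi : i ≤ k) :
      ε ^ i * ((n - (k - i)).choose i : ℝ) * (m.choose (k - i) : ℝ) ≤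
        m.choose k * (x ^ i / i.factorial) ^ 2 := by
    have h1 : ((n - (k - i)).choose i : ℝ) ≤ (n : ℝ) ^ i / i.factorial := by
      refine le_trans ?_ (Nat.choose_le_pow_div i n)
      exact_mod_cast Nat.choose_le_choose i (Nat.sub_le _ _)
    have h2 : (m.choose (k - i) : ℝ) ≤ m.choose k * ((n : ℝ) ^ i / i.factorial) := by
      have h3 : m.choose (k - i) ≤ m.choose k * k.choose i := by
        rw [← Nat.choose_symm hi, Nat.choose_mul (Nat.sub_le k i)]
        exact Nat.le_mul_of_pos_right _ (Nat.choose_pos (by omega))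
      calc (m.choose (k - i) : ℝ) ≤ m.choose k * (k.choose i : ℝ) := by exact_mod_cast h3
        _ ≤ m.choose k * (n.choose i : ℝ) := by
            gcongr
            exact hkm.trans hmn
        _ ≤ _ := by gcongr; exact Nat.choose_le_pow_div i n
    have h4 : ε ^ i = (√ε ^ i) ^ 2 := by
      rw [← pow_mul, mul_comm, pow_mul, Real.sq_sqrt hε]
    calc _ ≤ ε ^ i * ((n : ℝ) ^ i / i.factorial)
          * (m.choose k * ((n : ℝ) ^ i / i.factorial)) := by gcongr
      _ = _ := by rw [h4, hx]; ring
  calc ∑ j ∈ Finset.range (k + 1), ε ^ (k - j) * ((n - j).choose (k - j) : ℝ) * (m.choose j : ℝ)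
      = ∑ i ∈ Finset.range (k + 1),
          ε ^ i * ((n - (k - i)).choose i : ℝ) * (m.choose (k - i) : ℝ) := by
        rw [← Finset.sum_range_reflect]
        refine Finset.sum_congr rfl fun i hi => ?_
        have hi' := Finset.mem_range.mp hi
        rw [show k + 1 - 1 - i = k - i by omega, show k - (k - i) = i by omega]
    _ ≤ ∑ i ∈ Finset.range (k + 1), m.choose k * (x ^ i / i.factorial) ^ 2 :=
        Finset.sum_le_sum fun i hi => term i (Nat.lt_succ_iff.mp (Finset.mem_range.mp hi))
    _ = m.choose k * ∑ i ∈ Finset.range (k + 1), (x ^ i / i.factorial) ^ 2 := by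
        rw [Finset.mul_sum]
    _ ≤ m.choose k * (∑ i ∈ Finset.range (k + 1), x ^ i / i.factorial) ^ 2 := by
        gcongr
        exact Finset.sum_sq_le_sq_sum_of_nonneg fun i _ => by positivity
    _ ≤ m.choose k * Real.exp x ^ 2 := by
        gcongr
        exact Real.sum_le_exp_of_nonneg hx0 _
    _ = _ := by rw [← Real.exp_nat_mul]; norm_num

/-- Jensen's inequality for the logarithm, with a bound on the average. -/
theorem sum_log_le_card_mul_log {ι : Type*} (S : Finset ι) (d : ι → ℝ) {c : ℝ} (hc : 0 < c)
    (hd : ∀ s ∈ S, 0 < d s) (hsum : ∑ s ∈ S, d s ≤ #S * c) :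
    ∑ s ∈ S, Real.log (d s) ≤ #S * Real.log c := by
  have h : ∀ s ∈ S, Real.log (d s) ≤ d s / c - 1 + Real.log c := fun s hs => by
    have := Real.log_le_sub_one_of_pos (div_pos (hd s hs) hc)
    rw [Real.log_div (hd s hs).ne' hc.ne'] at this
    linarith
  have hsum' : (∑ s ∈ S, d s) / c ≤ #S := by rwa [div_le_iff₀ hc]
  calc _ ≤ ∑ s ∈ S, (d s / c - 1 + Real.log c) := Finset.sum_le_sum h
    _ = (∑ s ∈ S, d s) / c - #S + #S * Real.log c := by
        simp [Finset.sum_add_distrib, Finset.sum_sub_distrib, Finset.sum_div]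
    _ ≤ _ := by linarith

theorem colSubmatrix_gram_eq_submatrix {m n : ℕ} (B : Matrix (Fin m) (Fin n) ℂ)
    (s : Finset (Fin n)) (y : ℂ) :
    y • 1 + (colSubmatrix B s)ᴴ * colSubmatrix B s =
      (y • (1 : Matrix (Fin n) (Fin n) ℂ) + Bᴴ * B).submatrix
        (Subtype.val : s → Fin n) Subtype.val := by
  rw [submatrix_add, submatrix_smul, Pi.add_apply, Pi.add_apply, Pi.smul_apply, Pi.smul_apply,
    submatrix_one _ Subtype.val_injective]
  rfl

open scoped ComplexOrder in
theorem re_det_smul_one_add_gram_pos {m n : ℕ} (B : Matrix (Fin m) (Fin n) ℂ)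
    (s : Finset (Fin n)) {ε : ℝ} (hε : 0 < ε) :
    0 < ((ε : ℂ) • 1 + (colSubmatrix B s)ᴴ * colSubmatrix B s).det.re := by
  have h : ((ε : ℂ) • 1 + (colSubmatrix B s)ᴴ * colSubmatrix B s).PosDef :=
    (PosDef.one.smul (by exact_mod_cast hε)).add_posSemidef (posSemidef_conjTranspose_mul_self _)
  exact (Complex.pos_iff.mp h.det_pos).1

theorem sum_re_det_smul_one_add_gram_le {n m k : ℕ} (hkm : k ≤ m) (hmn : m ≤ n)
    (B : Matrix (Fin m) (Fin n) ℂ) (hB : B * Bᴴ = 1) {ε : ℝ} (hε : 0 < ε) :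
    ∑ s ∈ Finset.univ.powersetCard k,
        ((ε : ℂ) • 1 + (colSubmatrix B s)ᴴ * colSubmatrix B s).det.re ≤
      m.choose k * Real.exp (2 * (n * √ε)) := by
  refine le_of_eq_of_le ?_ (sum_pow_mul_choose_mul_choose_le hkm hmn hε.le)
  rw [← Complex.re_sum]
  simp_rw [colSubmatrix_gram_eq_submatrix]
  rw [sum_det_submatrix_smul_one_add _ _ (by exact_mod_cast hε.ne')]
  simp_rw [sum_det_submatrix_mul_eq_choose B Bᴴ hB, Fintype.card_fin]
  exact_mod_cast Complex.ofReal_re _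

/-- Let `n ≥ m ≥ k ≥ 1`, `p ≥ 1`, `α := m/n`, `β := k/n`, and let
`B₁, …, B_p` be `m × n` complex matrices each satisfying `Bᵢ Bᵢᴴ = I`.  Then for every
`ε > 0` the minimum over all `k`-element column subsets `s` of
`(1/(n·p)) ∑ᵢ log det (ε • I + (Bᵢ)ₛᴴ (Bᵢ)ₛ)` is at most
`α H(β/α) − H(β) + 2√ε + log(n+1)/n`. -/
theorem min_avg_log_det_le_entropy
    (n m k p : ℕ) (hk : 1 ≤ k) (hkm : k ≤ m) (hmn : m ≤ n) (hp : 1 ≤ p)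
    (α β : ℝ) (hα : α = (m : ℝ) / n) (hβ : β = (k : ℝ) / n)
    (B : Fin p → Matrix (Fin m) (Fin n) ℂ) (hB : ∀ i, B i * (B i)ᴴ = 1)
    (ε : ℝ) (hε : 0 < ε) :
    (Finset.univ.powersetCard k).inf'
        (Finset.powersetCard_nonempty.mpr (by simpa using hkm.trans hmn))
        (fun s => (1 / ((n : ℝ) * p)) * ∑ i : Fin p,
          Real.log (((ε : ℂ) • 1 +
            (colSubmatrix (B i) s)ᴴ * colSubmatrix (B i) s).det.re))
      ≤ α * binEntropy (β / α) - binEntropy β + 2 * Real.sqrt ε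
        + Real.log (n + 1) / n := by
  subst hα hβ
  have hm : 0 < m := hk.trans hkm
  have hn : 0 < n := hm.trans_le hmn
  have hn' : (0 : ℝ) < n := by exact_mod_cast hn
  have hm' : (0 : ℝ) < m := by exact_mod_cast hm
  have hp' : (0 : ℝ) < p := by exact_mod_cast hp
  have hmk : (0 : ℝ) < m.choose k := by exact_mod_cast Nat.choose_pos hkm
  have hnk : (0 : ℝ) < n.choose k := by exact_mod_cast Nat.choose_pos (hkm.trans hmn)
  set S := (Finset.univ : Finset (Fin n)).powersetCard k with hS
  have hcard : (#S : ℝ) = n.choose k := by simp [hS]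
  set d : Fin p → Finset (Fin n) → ℝ := fun i s =>
    ((ε : ℂ) • 1 + (colSubmatrix (B i) s)ᴴ * colSubmatrix (B i) s).det.re with hd
  set c : ℝ := m.choose k * Real.exp (2 * (n * √ε)) / n.choose k with hc
  have hlogc : Real.log c / n ≤ (m : ℝ) / n * binEntropy ((k : ℝ) / n / ((m : ℝ) / n))
      - binEntropy ((k : ℝ) / n) + 2 * √ε + Real.log (n + 1) / n := by
    have h1 := log_choose_le_binEntropy hm hkm
    have h2 := binEntropy_le_log_choose hn (hkm.trans hmn)
    rw [div_div_div_cancel_right₀ hn'.ne', div_le_iff₀ hn', hc,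
      Real.log_div (by positivity) hnk.ne', Real.log_mul hmk.ne' (Real.exp_pos _).ne', Real.log_exp]
    have h3 : ((m : ℝ) / n * binEntropy ((k : ℝ) / m) - binEntropy ((k : ℝ) / n) + 2 * √ε
        + Real.log (n + 1) / n) * n = m * binEntropy ((k : ℝ) / m) - n * binEntropy ((k : ℝ) / n)
        + 2 * (n * √ε) + Real.log (n + 1) := by field_simp
    linarith
  refine le_trans ?_ hlogc
  have hlog (i : Fin p) : ∑ s ∈ S, Real.log (d i s) ≤ n.choose k * Real.log c := by
    rw [← hcard]
    refine sum_log_le_card_mul_log S (d i) (by positivity)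
      (fun s _ => re_det_smul_one_add_gram_pos (B i) s hε) ?_
    rw [hcard, hc, mul_div_cancel₀ _ hnk.ne']
    exact sum_re_det_smul_one_add_gram_le hkm hmn (B i) (hB i) hε
  have havg : ∑ s ∈ S, (1 / ((n : ℝ) * p)) * ∑ i, Real.log (d i s) ≤
      ∑ s ∈ S, Real.log c / n := by
    rw [← Finset.mul_sum, Finset.sum_comm, Finset.sum_const, nsmul_eq_mul, hcard]
    calc _ ≤ 1 / ((n : ℝ) * p) * ∑ i : Fin p, n.choose k * Real.log c := by
          gcongr with i _
          exact hlog i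
      _ = _ := by simp; field_simp
  obtain ⟨s, hs, hle⟩ := Finset.exists_le_of_sum_le
    (Finset.powersetCard_nonempty.mpr (by simpa using hkm.trans hmn)) havg
  exact (Finset.inf'_le _ hs).trans hle
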